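/- arXiv:1301.5799 — 2 statements merged into one kernel-verified Lean document; each statement's English description precedes it below -/
import Mathlib

section
/- Assume D is induced by an r-skeleton in a compact Hausdorff space K. Then every subset of D which is closed in K is a Corson compact (with the subspace topology). -/
/-!
Let `C` be closed in `K` and contained in the set `D` induced by the skeleton `(r s)`.

*Reduction to `D = K`.* For `A ⊆ D`, a closing-off argument using separability of the ranges
`r s [K]` gives arbitrarily large `t` such that `r t` maps `closure A` into the closure of a
countable subset of `A` (`exists_reflecting`). With `A = C` it shows that the indices `s` with
`r s [C] ⊆ C` are cofinal; they are closed under suprema of sequences, so they form a skeleton on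
`C` whose induced set is all of `C` (`restrict`). The same lemma yields countable tightness when
`D = K`.

*Limits along directed sets.* For a nonempty directed set `M` of indices the net `(r s)_{s ∈ M}`
converges uniformly to a continuous retraction (`exists_limit`). Writing `R A` for the limit along
the directed set generated by `A`, countable tightness shows that each value `R A x` depends on
countably many elements of `A` only (`exists_countable_support`).

*A point-countable separating family.* By induction on the cardinality of `A` there is a family of
continuous functions separating the points separated by `R A`, only countably many of which are
nonzero at any given point (`exists_family`). For uncountable `A`, well-order `A` in its minimal
order type and take the differences `f ∘ R A_{≤ a} - f ∘ R A_{< a}` with `f` in the family of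
`A_{≤ a}`. At a given `x` only countably many `a` matter, because `R A_{≤ a} x ≠ R A_{< a} x` happens
for countably many `a` (`countable_jumps`). For `A` the set of all indices `R A` is the identity,
and evaluation at the family embeds the space into a `Σ`-product.
-/

open Filter Topology TopologicalSpace Set

universe u v

/-- A retractional skeleton in a topological space `K`: a family `r s : C(K, K)` of continuous
retractions indexed by an up-directed (nonempty) partially ordered set `Γ` such that
(i) each `r s` has metrizable range and the net `(r s x)` converges to `x`;
(ii) `s ≤ t` implies `r s ∘ r t = r t ∘ r s = r s`;
(iii) each strictly increasing sequence has a supremum `t` and `r t x = lim_n r (f n) x`. -/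
structure RetractionalSkeleton (K : Type u) [TopologicalSpace K] : Type (u + 1) where
  Γ : Type u
  [po : PartialOrder Γ]
  [ne : Nonempty Γ]
  directed : ∀ s t : Γ, ∃ w, s ≤ w ∧ t ≤ w
  r : Γ → C(K, K)
  isRetraction : ∀ s, ∀ x : K, r s (r s x) = r s x
  metrizable : ∀ s, MetrizableSpace ↥(Set.range (r s))
  tendsto_id : ∀ x : K, Tendsto (fun s => r s x) atTop (𝓝 x)
  comp_eq_of_le : ∀ s t : Γ, s ≤ t → ∀ x : K, r s (r t x) = r s x ∧ r t (r s x) = r s x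
  sup_seq : ∀ f : ℕ → Γ, StrictMono f → ∃ t : Γ, IsLUB (Set.range f) t ∧
    ∀ x : K, Tendsto (fun n => r (f n) x) atTop (𝓝 (r t x))

/-- The set `D(𝔰) = ⋃ s, r s [K]` induced by a retractional skeleton. -/
def RetractionalSkeleton.inducedSet {K : Type u} [TopologicalSpace K]
    (𝔰 : RetractionalSkeleton K) : Set K := ⋃ s, Set.range (𝔰.r s)

/-- `D` is induced by an r-skeleton in `K`. -/
def IsInducedByRSkeleton {K : Type u} [TopologicalSpace K] (D : Set K) : Prop :=
  ∃ 𝔰 : RetractionalSkeleton K, 𝔰.inducedSet = D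

/-- `K` has a retractional skeleton. -/
def HasRetractionalSkeleton (K : Type u) [TopologicalSpace K] : Prop :=
  Nonempty (RetractionalSkeleton K)

/-- `K` is a Corson compact space: it is homeomorphic to a compact subset of
`Σ(Γ) = {x ∈ ℝ^Γ : x γ ≠ 0 for at most countably many γ}` for some set `Γ`. -/
def IsCorsonCompact (K : Type u) [TopologicalSpace K] : Prop :=
  ∃ (Γ : Type u) (A : Set (Γ → ℝ)), IsCompact A ∧
    (∀ x ∈ A, {γ | x γ ≠ 0}.Countable) ∧ Nonempty (K ≃ₜ ↥A)

attribute [local instance] RetractionalSkeleton.po RetractionalSkeleton.ne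

namespace RetractionalSkeleton

/-! ### Elementary properties of skeletons -/

section Basic

variable {K : Type u} [TopologicalSpace K] (𝔰 : RetractionalSkeleton K)

lemma fixed_of_le {s t : 𝔰.Γ} (h : s ≤ t) {x : K} (hx : 𝔰.r s x = x) : 𝔰.r t x = x := by
  have := (𝔰.comp_eq_of_le s t h x).2
  rwa [hx] at this

lemma eq_of_le {s t : 𝔰.Γ} (h : s ≤ t) {x y : K} (hx : 𝔰.r t x = 𝔰.r t y) :
    𝔰.r s x = 𝔰.r s y := by
  rw [← (𝔰.comp_eq_of_le s t h x).1, hx, (𝔰.comp_eq_of_le s t h y).1]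

lemma mem_inducedSet {x : K} : x ∈ 𝔰.inducedSet ↔ ∃ s, 𝔰.r s x = x := by
  simp only [inducedSet, mem_iUnion, mem_range]
  constructor
  · rintro ⟨s, y, rfl⟩
    exact ⟨s, 𝔰.isRetraction s y⟩
  · rintro ⟨s, hs⟩
    exact ⟨s, x, hs⟩

/-- A weakly increasing sequence of indices has an upper bound `t` such that the retractions along
the sequence jointly determine `r t`. (A weakly increasing sequence has a strictly increasing or a
constant subsequence.) -/
lemma exists_seq_bound [T2Space K] (f : ℕ → 𝔰.Γ) (hf : Monotone f) :
    ∃ t, (∀ n, f n ≤ t) ∧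
      ∀ x y, (∀ n, 𝔰.r (f n) x = 𝔰.r (f n) y) → 𝔰.r t x = 𝔰.r t y := by
  obtain ⟨g, hg | hg⟩ := exists_increasing_or_nonincreasing_subseq (· < ·) f
  · obtain ⟨t, ht, hlim⟩ := 𝔰.sup_seq (f ∘ g) (fun m n h => hg m n h)
    refine ⟨t, fun n => (hf g.strictMono.le_apply).trans (ht.1 ⟨n, rfl⟩), fun x y h => ?_⟩
    refine tendsto_nhds_unique (hlim x) ?_
    have : (fun n => 𝔰.r ((f ∘ g) n) x) = fun n => 𝔰.r ((f ∘ g) n) y := funext fun n => h _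
    rw [this]
    exact hlim y
  · refine ⟨f (g 0), fun n => ?_, fun x y h => h _⟩
    rcases Nat.eq_zero_or_pos n with rfl | hn
    · exact hf (Nat.zero_le _)
    · have h1 : f (g 0) ≤ f (g n) := hf (g.monotone (Nat.zero_le _))
      have h2 : f (g 0) = f (g n) := h1.eq_of_not_lt (hg 0 n hn)
      rw [h2]
      exact hf g.strictMono.le_apply

lemma exists_countable_bound [T2Space K] (S : Set 𝔰.Γ) (hS : S.Countable) (s₀ : 𝔰.Γ) :
    ∃ t, s₀ ≤ t ∧ ∀ s ∈ S, s ≤ t := by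
  have hne : (insert s₀ S).Nonempty := ⟨s₀, mem_insert _ _⟩
  obtain ⟨e, he⟩ := (hS.insert s₀).exists_eq_range hne
  choose w hw1 hw2 using 𝔰.directed
  let f : ℕ → 𝔰.Γ := fun n => Nat.rec (e 0) (fun n p => w p (e (n + 1))) n
  have hf : Monotone f := monotone_nat_of_le_succ fun n => hw1 _ _
  have hef : ∀ n, e n ≤ f n := by
    intro n
    cases n with
    | zero => exact le_rfl
    | succ n => exact hw2 _ _
  obtain ⟨t, ht, -⟩ := 𝔰.exists_seq_bound f hf
  have key : ∀ s ∈ insert s₀ S, s ≤ t := by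
    intro s hs
    rw [he] at hs
    obtain ⟨n, rfl⟩ := hs
    exact (hef n).trans (ht n)
  exact ⟨t, key _ (mem_insert _ _), fun s hs => key _ (mem_insert_of_mem _ hs)⟩

end Basic

/-! ### Reflection to countable subsets -/

section Compact

variable {K : Type u} [TopologicalSpace K] [CompactSpace K] (𝔰 : RetractionalSkeleton K)

lemma exists_countable_dense_image (s : 𝔰.Γ) (A : Set K) :
    ∃ B ⊆ A, B.Countable ∧ 𝔰.r s '' A ⊆ closure (𝔰.r s '' B) := by
  have := 𝔰.metrizable s
  have : CompactSpace (range (𝔰.r s)) :=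
    isCompact_iff_compactSpace.1 (isCompact_range (𝔰.r s).continuous)
  let _ := metrizableSpaceMetric (range (𝔰.r s))
  have : SecondCountableTopology (range (𝔰.r s)) := inferInstance
  have hsub : 𝔰.r s '' A ⊆ range (𝔰.r s) := image_subset_range _ _
  have : SecondCountableTopology (𝔰.r s '' A) :=
    (IsEmbedding.inclusion hsub).secondCountableTopology
  obtain ⟨E, hEc, hEd⟩ := exists_countable_dense (𝔰.r s '' A)
  choose p hpA hp using fun z : 𝔰.r s '' A => z.2
  refine ⟨p '' E, ?_, hEc.image p, ?_⟩
  · rintro _ ⟨z, -, rfl⟩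
    exact hpA z
  · intro z hz
    have h1 : (⟨z, hz⟩ : 𝔰.r s '' A) ∈ closure E := hEd _
    have h2 := image_closure_subset_closure_image continuous_subtype_val (mem_image_of_mem _ h1)
    refine closure_mono ?_ h2
    rintro _ ⟨e, he, rfl⟩
    exact ⟨p e, mem_image_of_mem _ he, hp e⟩

variable [T2Space K]

/-- For a subset `A` of the induced set there are arbitrarily large indices `t` such that `r t` maps
the closure of `A` into the closure of a countable subset of `A`. A countable set `B` is built by
closing off, so that `B` is fixed by `r t` and `r (s n) '' closure B` contains
`r (s n) '' closure A` along an increasing sequence `s n` bounded by `t`. -/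
lemma exists_reflecting (A : Set K) (hA : A ⊆ 𝔰.inducedSet) (s₀ : 𝔰.Γ) :
    ∃ t, s₀ ≤ t ∧ ∃ B ⊆ A, B.Countable ∧ ∀ x ∈ closure A, 𝔰.r t x ∈ closure B := by
  choose Bf hBA hBc hBd using fun s => 𝔰.exists_countable_dense_image s A
  have hup : ∀ s, ∃ t, s ≤ t ∧ ∀ b ∈ Bf s, 𝔰.r t b = b := by
    intro s
    have : ∀ b : K, ∃ q, b ∈ Bf s → 𝔰.r q b = b := by
      intro b
      by_cases hb : b ∈ Bf s
      · obtain ⟨q, hq⟩ := 𝔰.mem_inducedSet.1 (hA (hBA s hb))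
        exact ⟨q, fun _ => hq⟩
      · exact ⟨s, fun h => absurd h hb⟩
    choose q hq using this
    obtain ⟨t, hst, ht⟩ := 𝔰.exists_countable_bound (q '' Bf s) ((hBc s).image q) s
    exact ⟨t, hst, fun b hb => 𝔰.fixed_of_le (ht _ (mem_image_of_mem _ hb)) (hq b hb)⟩
  choose up hle hfix using hup
  let f : ℕ → 𝔰.Γ := fun n => Nat.rec s₀ (fun _ p => up p) n
  have hf : Monotone f := monotone_nat_of_le_succ fun n => hle _
  obtain ⟨t, ht, hsep⟩ := 𝔰.exists_seq_bound f hf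
  let B : Set K := ⋃ n, Bf (f n)
  have hBfix : ∀ b ∈ closure B, 𝔰.r t b = b := by
    have hcl : IsClosed {b | 𝔰.r t b = b} := isClosed_eq (𝔰.r t).continuous continuous_id
    intro b hb
    refine closure_minimal (t := {b | 𝔰.r t b = b}) ?_ hcl hb
    intro b hb
    obtain ⟨n, hn⟩ := mem_iUnion.1 hb
    exact 𝔰.fixed_of_le (ht (n + 1)) (hfix (f n) b hn)
  refine ⟨t, ht 0, B, iUnion_subset fun n => hBA _, countable_iUnion fun n => hBc _,
    fun x hx => ?_⟩
  let Z : ℕ → Set K := fun n => closure B ∩ {y | 𝔰.r (f n) y = 𝔰.r (f n) x}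
  have hZcl : ∀ n, IsClosed (Z n) := fun n =>
    isClosed_closure.inter (isClosed_eq (𝔰.r (f n)).continuous continuous_const)
  have hZ : (⋂ n, Z n).Nonempty := by
    refine IsCompact.nonempty_iInter_of_sequence_nonempty_isCompact_isClosed Z ?_ ?_
      (hZcl 0).isCompact hZcl
    · rintro n y ⟨hy, hyx⟩
      exact ⟨hy, 𝔰.eq_of_le (hf (Nat.le_succ n)) hyx⟩
    · intro n
      have h1 : 𝔰.r (f n) x ∈ closure (𝔰.r (f n) '' A) :=
        image_closure_subset_closure_image (𝔰.r (f n)).continuous (mem_image_of_mem _ hx)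
      have h2 : 𝔰.r (f n) x ∈ closure (𝔰.r (f n) '' B) := by
        refine closure_minimal ((hBd (f n)).trans (closure_mono (image_mono ?_)))
          isClosed_closure h1
        exact subset_iUnion (fun n => Bf (f n)) n
      rw [← image_closure_of_isCompact isClosed_closure.isCompact
        (𝔰.r (f n)).continuous.continuousOn] at h2
      obtain ⟨y, hy, hyx⟩ := h2
      exact ⟨y, hy, hyx⟩
  obtain ⟨y, hy⟩ := hZ
  rw [mem_iInter] at hy
  rw [← hsep y x fun n => (hy n).2, hBfix y (hy 0).1]
  exact (hy 0).1

end Compact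

/-! ### Restriction to closed subsets of the induced set -/

section Restrict

variable {K : Type u} [TopologicalSpace K] [CompactSpace K] [T2Space K]
  (𝔰 : RetractionalSkeleton K)

lemma exists_mapsTo {C : Set K} (hC : IsClosed C) (hCD : C ⊆ 𝔰.inducedSet) (s : 𝔰.Γ) :
    ∃ t, s ≤ t ∧ MapsTo (𝔰.r t) C C := by
  obtain ⟨t, hst, B, hBC, -, h⟩ := 𝔰.exists_reflecting C hCD s
  exact ⟨t, hst, fun x hx => closure_minimal hBC hC (h x (subset_closure hx))⟩

/-- The skeleton induced on a closed subset `C` of the induced set: its indices are those `s`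
with `r s '' C ⊆ C`. -/
def restrict {C : Set K} (hC : IsClosed C) (hCD : C ⊆ 𝔰.inducedSet) : RetractionalSkeleton C :=
  letI : Nonempty {s : 𝔰.Γ // MapsTo (𝔰.r s) C C} := by
    obtain ⟨t, -, ht⟩ := 𝔰.exists_mapsTo hC hCD (Classical.arbitrary _)
    exact ⟨⟨t, ht⟩⟩
  { Γ := {s : 𝔰.Γ // MapsTo (𝔰.r s) C C}
    directed := by
      rintro ⟨s, hs⟩ ⟨t, ht⟩
      obtain ⟨w, hsw, htw⟩ := 𝔰.directed s t
      obtain ⟨w', hww, hw'⟩ := 𝔰.exists_mapsTo hC hCD w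
      exact ⟨⟨w', hw'⟩, hsw.trans hww, htw.trans hww⟩
    r := fun s => ⟨s.2.restrict _ _ _, (𝔰.r s.1).continuous.restrict s.2⟩
    isRetraction := fun s x => Subtype.ext (𝔰.isRetraction s.1 x)
    metrizable := by
      intro s
      have := 𝔰.metrizable s.1
      let j : range (s.2.restrict (𝔰.r s.1) C C) → range (𝔰.r s.1) := fun z =>
        ⟨z.1.1, by obtain ⟨x, hx⟩ := z.2; exact ⟨x.1, by rw [← hx]; rfl⟩⟩
      have hj : IsEmbedding j := by
        have h : IsEmbedding fun z : range (s.2.restrict (𝔰.r s.1) C C) => (z.1 : K) :=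
          IsEmbedding.subtypeVal.comp IsEmbedding.subtypeVal
        exact IsEmbedding.of_comp
          ((continuous_subtype_val.comp continuous_subtype_val).subtype_mk _)
          continuous_subtype_val h
      exact hj.metrizableSpace
    tendsto_id := by
      intro x
      rw [tendsto_subtype_rng]
      have hcof : Tendsto (Subtype.val : {s : 𝔰.Γ // MapsTo (𝔰.r s) C C} → 𝔰.Γ) atTop atTop := by
        refine tendsto_atTop.2 fun b => ?_
        obtain ⟨t, hbt, ht⟩ := 𝔰.exists_mapsTo hC hCD b
        filter_upwards [eventually_ge_atTop
          (⟨t, ht⟩ : {s : 𝔰.Γ // MapsTo (𝔰.r s) C C})] with a ha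
        exact hbt.trans ha
      exact (𝔰.tendsto_id x.1).comp hcof
    comp_eq_of_le := fun s t hst x =>
      ⟨Subtype.ext (𝔰.comp_eq_of_le s.1 t.1 hst x).1, Subtype.ext (𝔰.comp_eq_of_le s.1 t.1 hst x).2⟩
    sup_seq := by
      intro f hf
      obtain ⟨t, ht, hlim⟩ := 𝔰.sup_seq (fun n => (f n).1) hf
      have htC : MapsTo (𝔰.r t) C C := fun x hx =>
        hC.mem_of_tendsto (hlim x) (Eventually.of_forall fun n => (f n).2 hx)
      refine ⟨⟨t, htC⟩, ⟨?_, ?_⟩, ?_⟩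
      · rintro _ ⟨n, rfl⟩
        exact ht.1 ⟨n, rfl⟩
      · intro b hb
        refine ht.2 ?_
        rintro _ ⟨n, rfl⟩
        exact hb ⟨n, rfl⟩
      · intro x
        rw [tendsto_subtype_rng]
        exact hlim x }

lemma restrict_inducedSet {C : Set K} (hC : IsClosed C) (hCD : C ⊆ 𝔰.inducedSet) :
    (𝔰.restrict hC hCD).inducedSet = univ := by
  refine eq_univ_of_forall fun x => ?_
  obtain ⟨s, hs⟩ := 𝔰.mem_inducedSet.1 (hCD x.2)
  obtain ⟨t, hst, ht⟩ := 𝔰.exists_mapsTo hC hCD s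
  exact (mem_inducedSet _).2 ⟨⟨t, ht⟩, Subtype.ext (𝔰.fixed_of_le hst hs)⟩

end Restrict

/-! ### Limits along directed sets of indices -/

section Limit

variable {K : Type u} [TopologicalSpace K] [CompactSpace K] [T2Space K]
  (𝔰 : RetractionalSkeleton K)

/-- The retractions indexed by a nonempty directed set `M` of indices converge to a
continuous map. The net is uniformly Cauchy: otherwise, along an increasing sequence `s n` in `M`,
cluster points `a`, `b` of `r (s (n + 1)) (x n)` and `r (s n) (x n)` would be distinct points fixed
by `r t` for a bound `t` of the sequence, although every `r (s k)` identifies them. -/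
lemma exists_limit (M : Set 𝔰.Γ) (hne : M.Nonempty) (hdir : DirectedOn (· ≤ ·) M) :
    ∃ R : C(K, K), ∀ x, Tendsto (fun s : M => 𝔰.r s x) atTop (𝓝 (R x)) := by
  let _ : UniformSpace K := uniformSpaceOfCompactR1
  have : Nonempty M := hne.to_subtype
  have : IsDirectedOrder M := ⟨fun a b => by
    obtain ⟨c, hc, hac, hbc⟩ := hdir a a.2 b b.2
    exact ⟨⟨c, hc⟩, hac, hbc⟩⟩
  have key : ∀ V ∈ uniformity K, ∃ s : M, ∀ t : M, s ≤ t → ∀ x, (𝔰.r s x, 𝔰.r t x) ∈ V := by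
    intro V hV
    by_contra! hcon
    choose nx hle x hx using hcon
    let f : ℕ → M := fun n => Nat.rec (Classical.arbitrary M) (fun _ p => nx p) n
    have hf : Monotone f := monotone_nat_of_le_succ fun n => hle _
    have hf' : Monotone fun n : ℕ => (f n).1 := fun m n h => hf h
    obtain ⟨t, ht, hsep⟩ := 𝔰.exists_seq_bound (fun n => (f n).1) hf'
    let U : Ultrafilter ℕ := hyperfilter ℕ
    have hU : (U : Filter ℕ) ≤ atTop := Nat.hyperfilter_le_atTop
    obtain ⟨a, -, ha⟩ := isCompact_univ.ultrafilter_le_nhds'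
      (U.map fun n => 𝔰.r (f n).1 (x (f n))) univ_mem
    obtain ⟨b, -, hb⟩ := isCompact_univ.ultrafilter_le_nhds'
      (U.map fun n => 𝔰.r (f (n + 1)).1 (x (f n))) univ_mem
    have ha' : Tendsto (fun n => 𝔰.r (f n).1 (x (f n))) U (𝓝 a) := ha
    have hb' : Tendsto (fun n => 𝔰.r (f (n + 1)).1 (x (f n))) U (𝓝 b) := hb
    have hta : 𝔰.r t a = a := by
      refine tendsto_nhds_unique (((𝔰.r t).continuous.tendsto a).comp ha') ?_
      refine ha'.congr fun n => ?_
      exact (𝔰.comp_eq_of_le _ _ (ht n) _).2.symm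
    have htb : 𝔰.r t b = b := by
      refine tendsto_nhds_unique (((𝔰.r t).continuous.tendsto b).comp hb') ?_
      refine hb'.congr fun n => ?_
      exact (𝔰.comp_eq_of_le _ _ (ht (n + 1)) _).2.symm
    have hab : a = b := by
      rw [← hta, ← htb]
      refine hsep a b fun k => ?_
      refine tendsto_nhds_unique (((𝔰.r (f k).1).continuous.tendsto a).comp ha') ?_
      refine (((𝔰.r (f k).1).continuous.tendsto b).comp hb').congr' ?_
      filter_upwards [hU (eventually_ge_atTop k)] with n hn
      have h1 := (𝔰.comp_eq_of_le _ _ (hf' hn) (x (f n))).1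
      have h2 := (𝔰.comp_eq_of_le _ _ (hf' (hn.trans n.le_succ)) (x (f n))).1
      exact h2.trans h1.symm
    subst hab
    have hV' : V ∈ 𝓝 (a, a) := by
      rw [← nhdsSet_diagonal_eq_uniformity] at hV
      exact mem_nhdsSet_iff_forall.1 hV (a, a) rfl
    have hev := (ha'.prodMk_nhds hb') hV'
    obtain ⟨n, hn⟩ := (U : Filter ℕ).nonempty_of_mem hev
    exact hx (f n) hn
  have hC : UniformCauchySeqOn (fun (s : M) x => 𝔰.r s x) atTop univ := by
    intro V hV
    obtain ⟨W, hW, hWs, hWV⟩ := comp_symm_mem_uniformity_sets hV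
    obtain ⟨s, hs⟩ := key W hW
    filter_upwards [(eventually_ge_atTop s).prod_mk (eventually_ge_atTop s)] with p hp x _
    exact hWV ⟨𝔰.r s x, hWs.symm _ _ (hs _ hp.1 x), hs _ hp.2 x⟩
  have hlim : ∀ x, ∃ y, Tendsto (fun s : M => 𝔰.r s x) atTop (𝓝 y) := fun x =>
    cauchy_map_iff_exists_tendsto.1 (hC.cauchy_map (mem_univ x))
  choose R hR using hlim
  have hunif := hC.tendstoUniformlyOn_of_tendsto (f := R) fun x _ => hR x
  rw [tendstoUniformlyOn_univ] at hunif
  exact ⟨⟨R, hunif.continuous (Frequently.of_forall fun s => (𝔰.r s).continuous)⟩, hR⟩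

end Limit

/-! ### Directed sets generated by sets of indices -/

section Hull

variable {K : Type u} [TopologicalSpace K] (𝔰 : RetractionalSkeleton K)

lemma exists_monotone_bound :
    ∃ g : Finset 𝔰.Γ → 𝔰.Γ, Monotone g ∧ ∀ F, ∀ s ∈ F, s ≤ g F := by
  classical
  have : IsDirectedOrder 𝔰.Γ := ⟨𝔰.directed⟩
  have hb : ∀ F : Finset 𝔰.Γ, ∃ t, ∀ s ∈ F, s ≤ t := fun F => F.exists_le
  choose b hb using hb
  let H : ∀ F : Finset 𝔰.Γ, (∀ E ⊂ F, 𝔰.Γ) → 𝔰.Γ := fun F p =>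
    b (F ∪ F.ssubsets.attach.image fun E => p E.1 (Finset.mem_ssubsets.1 E.2))
  let g : Finset 𝔰.Γ → 𝔰.Γ := Finset.strongInduction H
  have hg : ∀ F, g F = H F fun E _ => g E := fun F => Finset.strongInduction_eq H F
  refine ⟨g, fun E F hEF => ?_, fun F s hs => ?_⟩
  · rcases eq_or_ssubset_of_subset (show E ⊆ F from hEF) with h | h
    · rw [h]
    · rw [hg F]
      refine hb _ _ (Finset.mem_union_right _ (Finset.mem_image.2 ?_))
      exact ⟨⟨E, Finset.mem_ssubsets.2 h⟩, Finset.mem_attach _ _, rfl⟩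
  · rw [hg F]
    exact hb _ _ (Finset.mem_union_left _ hs)

/-- A monotone choice of an upper bound for each finite set of indices. -/
noncomputable def bd : Finset 𝔰.Γ → 𝔰.Γ := 𝔰.exists_monotone_bound.choose

lemma bd_mono : Monotone 𝔰.bd := 𝔰.exists_monotone_bound.choose_spec.1

lemma le_bd {F : Finset 𝔰.Γ} {s : 𝔰.Γ} (hs : s ∈ F) : s ≤ 𝔰.bd F :=
  𝔰.exists_monotone_bound.choose_spec.2 F s hs

/-- The directed set of indices generated by `A`: the chosen upper bounds of the finite subsets
of `A`. It is never empty, and it is countable when `A` is. -/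
def hull (A : Set 𝔰.Γ) : Set 𝔰.Γ := 𝔰.bd '' {F | (F : Set 𝔰.Γ) ⊆ A}

lemma hull_mono {A B : Set 𝔰.Γ} (h : A ⊆ B) : 𝔰.hull A ⊆ 𝔰.hull B :=
  image_mono fun _ hF => Subset.trans hF h

lemma hull_nonempty (A : Set 𝔰.Γ) : (𝔰.hull A).Nonempty :=
  ⟨𝔰.bd ∅, ∅, by simp, rfl⟩

lemma hull_directedOn (A : Set 𝔰.Γ) : DirectedOn (· ≤ ·) (𝔰.hull A) := by
  classical
  rintro _ ⟨E, hE, rfl⟩ _ ⟨F, hF, rfl⟩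
  refine ⟨𝔰.bd (E ∪ F), ⟨E ∪ F, ?_, rfl⟩, 𝔰.bd_mono Finset.subset_union_left,
    𝔰.bd_mono Finset.subset_union_right⟩
  simpa using And.intro hE hF

lemma hull_countable {A : Set 𝔰.Γ} (hA : A.Countable) : (𝔰.hull A).Countable := by
  refine Countable.image ?_ _
  have h := countable_ofPred_finite_subset hA
  refine (h.preimage_of_injOn (f := fun F : Finset 𝔰.Γ => (F : Set 𝔰.Γ))
    Finset.coe_injective.injOn).mono ?_
  intro F hF
  exact ⟨F.finite_toSet, hF⟩

end Hull

/-! ### The limit retractions -/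

section Retraction

variable {K : Type u} [TopologicalSpace K] [CompactSpace K] [T2Space K]
  (𝔰 : RetractionalSkeleton K)

/-- The limit of the retractions indexed by the directed set generated by `A`. -/
noncomputable def R (A : Set 𝔰.Γ) : C(K, K) :=
  (𝔰.exists_limit (𝔰.hull A) (𝔰.hull_nonempty A) (𝔰.hull_directedOn A)).choose

lemma tendsto_R (A : Set 𝔰.Γ) (x : K) :
    Tendsto (fun s : 𝔰.hull A => 𝔰.r s x) atTop (𝓝 (𝔰.R A x)) :=
  (𝔰.exists_limit (𝔰.hull A) (𝔰.hull_nonempty A) (𝔰.hull_directedOn A)).choose_spec x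

instance hull_atTop_neBot (A : Set 𝔰.Γ) : (atTop : Filter (𝔰.hull A)).NeBot := by
  have : Nonempty (𝔰.hull A) := (𝔰.hull_nonempty A).to_subtype
  have : IsDirectedOrder (𝔰.hull A) := ⟨fun a b => by
    obtain ⟨c, hc, hac, hbc⟩ := 𝔰.hull_directedOn A a a.2 b b.2
    exact ⟨⟨c, hc⟩, hac, hbc⟩⟩
  infer_instance

lemma R_eq_of_forall {A : Set 𝔰.Γ} {x y : K} (h : ∀ s ∈ 𝔰.hull A, 𝔰.r s x = 𝔰.r s y) :
    𝔰.R A x = 𝔰.R A y := by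
  refine tendsto_nhds_unique (𝔰.tendsto_R A x) ((𝔰.tendsto_R A y).congr fun s => ?_)
  exact (h s s.2).symm

lemma r_R {A : Set 𝔰.Γ} {s : 𝔰.Γ} (hs : s ∈ 𝔰.hull A) (x : K) :
    𝔰.r s (𝔰.R A x) = 𝔰.r s x := by
  refine tendsto_nhds_unique (((𝔰.r s).continuous.tendsto _).comp (𝔰.tendsto_R A x)) ?_
  refine tendsto_const_nhds.congr' ?_
  filter_upwards [eventually_ge_atTop (⟨s, hs⟩ : 𝔰.hull A)] with t ht
  exact (𝔰.comp_eq_of_le s t ht x).1.symm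

lemma R_r {A : Set 𝔰.Γ} {s : 𝔰.Γ} (hs : s ∈ 𝔰.hull A) (x : K) :
    𝔰.R A (𝔰.r s x) = 𝔰.r s x := by
  refine tendsto_nhds_unique (𝔰.tendsto_R A _) ?_
  refine tendsto_const_nhds.congr' ?_
  filter_upwards [eventually_ge_atTop (⟨s, hs⟩ : 𝔰.hull A)] with t ht
  exact (𝔰.comp_eq_of_le s t ht x).2.symm

lemma r_eq_of_R_eq {A : Set 𝔰.Γ} {s : 𝔰.Γ} (hs : s ∈ 𝔰.hull A) {x y : K}
    (h : 𝔰.R A x = 𝔰.R A y) : 𝔰.r s x = 𝔰.r s y := by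
  rw [← 𝔰.r_R hs x, h, 𝔰.r_R hs]

lemma R_R {A B : Set 𝔰.Γ} (h : A ⊆ B) (x : K) : 𝔰.R A (𝔰.R B x) = 𝔰.R A x :=
  𝔰.R_eq_of_forall fun _ hs => 𝔰.r_R (𝔰.hull_mono h hs) x

/-- If every point is fixed by some `r s`, then `R J x` is already determined by a countable part of
`J`: it equals `R B x` whenever `T ⊆ B ⊆ J` for a suitable countable `T`. This is countable
tightness applied to the net converging to `R J x`. -/
lemma exists_countable_support (hD : 𝔰.inducedSet = univ) (J : Set 𝔰.Γ) (x : K) :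
    ∃ T ⊆ J, T.Countable ∧ ∀ B, T ⊆ B → B ⊆ J → 𝔰.R B x = 𝔰.R J x := by
  have hcl : 𝔰.R J x ∈ closure ((fun s => 𝔰.r s x) '' 𝔰.hull J) :=
    mem_closure_of_tendsto (𝔰.tendsto_R J x)
      (Eventually.of_forall fun s => mem_image_of_mem _ s.2)
  obtain ⟨s₀, hs₀⟩ := 𝔰.mem_inducedSet.1 (hD ▸ mem_univ (𝔰.R J x))
  obtain ⟨t, ht, E, hE, hEc, h⟩ := 𝔰.exists_reflecting _ (hD ▸ subset_univ _) s₀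
  have hmem := h _ hcl
  rw [𝔰.fixed_of_le ht hs₀] at hmem
  have hsel : ∀ e : E, ∃ F : Finset 𝔰.Γ, (F : Set 𝔰.Γ) ⊆ J ∧ 𝔰.r (𝔰.bd F) x = e := by
    rintro ⟨e, he⟩
    obtain ⟨_, ⟨F, hF, rfl⟩, hFe⟩ := hE he
    exact ⟨F, hF, hFe⟩
  choose F hFJ hFe using hsel
  have := hEc.to_subtype
  refine ⟨⋃ e, (F e : Set 𝔰.Γ), iUnion_subset hFJ,
    countable_iUnion fun e => (F e).countable_toSet, fun B hTB hBJ => ?_⟩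
  have hfix : 𝔰.R B (𝔰.R J x) = 𝔰.R J x := by
    refine closure_minimal (t := {z | 𝔰.R B z = z}) ?_
      (isClosed_eq (𝔰.R B).continuous continuous_id) hmem
    intro e he
    have h1 : 𝔰.bd (F ⟨e, he⟩) ∈ 𝔰.hull B :=
      ⟨_, (subset_iUnion (fun e => (F e : Set 𝔰.Γ)) ⟨e, he⟩).trans hTB, rfl⟩
    have h2 := 𝔰.R_r h1 x
    rwa [hFe] at h2
  rw [← hfix, 𝔰.R_R hBJ]

end Retraction

/-! ### Well-orderings of minimal type -/

section Rank

open Cardinal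

/-- A well-ordering of `A` in its minimal order type, as an ordinal-valued rank. -/
lemma exists_rank {Γ : Type u} (A : Set Γ) (hA : ¬ A.Countable) :
    ∃ ρ : Γ → Ordinal.{u}, InjOn ρ A ∧ ∀ a ∈ A, #{b | b ∈ A ∧ ρ b ≤ ρ a} < #A := by
  classical
  obtain ⟨r, wo, hr⟩ := Cardinal.exists_ord_eq A
  let ρ : Γ → Ordinal.{u} := fun a => if h : a ∈ A then Ordinal.typein r ⟨a, h⟩ else 0
  have hρ : ∀ a (h : a ∈ A), ρ a = Ordinal.typein r ⟨a, h⟩ := fun a h => dif_pos h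
  have hinj : InjOn ρ A := by
    intro a ha b hb hab
    rw [hρ a ha, hρ b hb] at hab
    exact congrArg Subtype.val (Ordinal.typein_injective r hab)
  refine ⟨ρ, hinj, fun a ha => ?_⟩
  have hinf : ℵ₀ ≤ #A := by
    by_contra! h
    exact hA (le_aleph0_iff_set_countable.1 h.le)
  have h1 : #{b : A | r b ⟨a, ha⟩} < #A := by
    have := Cardinal.card_typein_lt (r := r) ⟨a, ha⟩ hr
    rwa [Ordinal.card_typein] at this
  have hsub : {b | b ∈ A ∧ ρ b ≤ ρ a} ⊆ insert a (Subtype.val '' {b : A | r b ⟨a, ha⟩}) := by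
    rintro b ⟨hb, hba⟩
    rcases hba.lt_or_eq with h | h
    · right
      rw [hρ a ha, hρ b hb, Ordinal.typein_lt_typein] at h
      exact ⟨⟨b, hb⟩, h, rfl⟩
    · left
      exact hinj hb ha h
  calc #{b | b ∈ A ∧ ρ b ≤ ρ a}
      ≤ #(insert a (Subtype.val '' {b : A | r b ⟨a, ha⟩}) : Set Γ) := mk_le_mk_of_subset hsub
    _ ≤ #(Subtype.val '' {b : A | r b ⟨a, ha⟩} : Set Γ) + 1 := mk_insert_le
    _ < #A := add_lt_of_lt hinf (mk_image_le.trans_lt h1) (one_lt_aleph0.trans_le hinf)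

end Rank

/-! ### Point-countable separating families -/

section Family

variable {K : Type u} [TopologicalSpace K] [CompactSpace K] (𝔰 : RetractionalSkeleton K)

lemma exists_countable_separating (s : 𝔰.Γ) :
    ∃ F : Set C(K, ℝ), F.Countable ∧ ∀ x y, 𝔰.r s x ≠ 𝔰.r s y → ∃ f ∈ F, f x ≠ f y := by
  have := 𝔰.metrizable s
  have : CompactSpace (range (𝔰.r s)) :=
    isCompact_iff_compactSpace.1 (isCompact_range (𝔰.r s).continuous)
  let _ := metrizableSpaceMetric (range (𝔰.r s))
  obtain ⟨E, hEc, hEd⟩ := exists_countable_dense (range (𝔰.r s))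
  let p : K → range (𝔰.r s) := rangeFactorization (𝔰.r s)
  have hp : Continuous p := (𝔰.r s).continuous.subtype_mk _
  refine ⟨(fun d => (⟨fun x => dist (p x) d, hp.dist continuous_const⟩ : C(K, ℝ))) '' E,
    hEc.image _, fun x y hxy => ?_⟩
  by_contra! hcon
  have h1 : ∀ d ∈ E, dist (p x) d = dist (p y) d := fun d hd => hcon _ (mem_image_of_mem _ hd)
  have h2 : (fun d => dist (p x) d) = fun d => dist (p y) d :=
    Continuous.ext_on hEd (by fun_prop) (by fun_prop) h1
  have h3 := congrFun h2 (p y)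
  simp only [dist_self, dist_eq_zero] at h3
  exact hxy (congrArg Subtype.val h3)

variable [T2Space K]

/-- Along a well-ordered filtration of `A`, the point `R · x` jumps at only countably many stages.
By induction on `i` there are countably many jumps below `i`: if a countable `T` determines
`R {a ∈ A | ρ a < i} x` then no jump can be above all of `T`. -/
lemma countable_jumps (hD : 𝔰.inducedSet = univ) (A : Set 𝔰.Γ) (ρ : 𝔰.Γ → Ordinal.{u})
    (hρ : InjOn ρ A) (x : K) :
    {a | a ∈ A ∧ 𝔰.R {b | b ∈ A ∧ ρ b ≤ ρ a} x ≠ 𝔰.R {b | b ∈ A ∧ ρ b < ρ a} x}.Countable := by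
  set S := {a | a ∈ A ∧ 𝔰.R {b | b ∈ A ∧ ρ b ≤ ρ a} x ≠ 𝔰.R {b | b ∈ A ∧ ρ b < ρ a} x} with hS
  have step : ∀ J ⊆ A, (∀ a ∈ J, ∀ b ∈ A, ρ b ≤ ρ a → b ∈ J) →
      (∀ a ∈ J, {b | b ∈ S ∧ ρ b < ρ a}.Countable) → (S ∩ J).Countable := by
    intro J hJA hJ hc
    obtain ⟨T, hTJ, hTc, hT⟩ := 𝔰.exists_countable_support hD J x
    have hsub : S ∩ J ⊆ ⋃ a ∈ T, insert a {b | b ∈ S ∧ ρ b < ρ a} := by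
      rintro k ⟨hkS, hkJ⟩
      by_contra hk
      simp only [mem_iUnion, mem_insert_iff, mem_ofPred_eq, not_exists, not_or, not_and,
        not_lt] at hk
      have hlt : ∀ a ∈ T, ρ a < ρ k := by
        intro a ha
        refine lt_of_le_of_ne ((hk a ha).2 hkS) fun h => ?_
        exact (hk a ha).1 (hρ (hJA hkJ) (hJA (hTJ ha)) h.symm)
      have h1 := hT {b | b ∈ A ∧ ρ b ≤ ρ k} (fun a ha => ⟨hJA (hTJ ha), (hlt a ha).le⟩)
        (fun b hb => hJ k hkJ b hb.1 hb.2)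
      have h2 := hT {b | b ∈ A ∧ ρ b < ρ k} (fun a ha => ⟨hJA (hTJ ha), hlt a ha⟩)
        (fun b hb => hJ k hkJ b hb.1 hb.2.le)
      exact hkS.2 (h1.trans h2.symm)
    exact (hTc.biUnion fun a ha => (hc a (hTJ ha)).insert a).mono hsub
  have below : ∀ i : Ordinal.{u}, {b | b ∈ S ∧ ρ b < i}.Countable := by
    intro i
    induction i using WellFoundedLT.induction with
    | ind i ih =>
      refine (step {b | b ∈ A ∧ ρ b < i} (fun b hb => hb.1)
        (fun a ha b hb hba => ⟨hb, hba.trans_lt ha.2⟩) (fun a ha => ih _ ha.2)).mono ?_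
      exact fun b hb => ⟨hb.1, hb.1.1, hb.2⟩
  refine (step A Subset.rfl (fun _ _ b hb _ => hb) fun a _ => below _).mono ?_
  exact fun b hb => ⟨hb, hb.1⟩

/-- By induction on the cardinality of `A`: there is a point-countable family of continuous functions
separating the points which `R A` separates. For uncountable `A`, well-ordered in minimal type, the
family consists of the differences `f ∘ R A_{≤ a} - f ∘ R A_{< a}` with `f` in the family of the
initial segment `A_{≤ a}`. -/
lemma exists_family (hD : 𝔰.inducedSet = univ) (A : Set 𝔰.Γ) :
    ∃ F : Set C(K, ℝ), (∀ x, {f | f ∈ F ∧ f x ≠ 0}.Countable) ∧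
      ∀ x y, 𝔰.R A x ≠ 𝔰.R A y → ∃ f ∈ F, f x ≠ f y := by
  induction hc : Cardinal.mk A using WellFoundedLT.induction generalizing A with
  | ind c ih =>
  subst hc
  have countable_case : ∀ B : Set 𝔰.Γ, B.Countable →
      ∃ F : Set C(K, ℝ), (∀ x, {f | f ∈ F ∧ f x ≠ 0}.Countable) ∧
        ∀ x y, 𝔰.R B x ≠ 𝔰.R B y → ∃ f ∈ F, f x ≠ f y := by
    intro B hB
    choose G hGc hG using 𝔰.exists_countable_separating
    refine ⟨⋃ s ∈ 𝔰.hull B, G s, fun x => ?_, fun x y hxy => ?_⟩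
    · exact ((𝔰.hull_countable hB).biUnion fun s _ => hGc s).mono fun f hf => hf.1
    · have : ∃ s ∈ 𝔰.hull B, 𝔰.r s x ≠ 𝔰.r s y := by
        by_contra! h
        exact hxy (𝔰.R_eq_of_forall h)
      obtain ⟨s, hs, hne⟩ := this
      obtain ⟨f, hf, hfxy⟩ := hG s x y hne
      exact ⟨f, mem_biUnion hs hf, hfxy⟩
  by_cases hA : A.Countable
  · exact countable_case A hA
  obtain ⟨ρ, hρ, hcard⟩ := exists_rank A hA
  let P : 𝔰.Γ → Set 𝔰.Γ := fun a => {b | b ∈ A ∧ ρ b ≤ ρ a}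
  let Q : 𝔰.Γ → Set 𝔰.Γ := fun a => {b | b ∈ A ∧ ρ b < ρ a}
  have hfam : ∀ a : A, ∃ F : Set C(K, ℝ), (∀ x, {f | f ∈ F ∧ f x ≠ 0}.Countable) ∧
      ∀ x y, 𝔰.R (P a) x ≠ 𝔰.R (P a) y → ∃ f ∈ F, f x ≠ f y :=
    fun a => ih _ (hcard a a.2) (P a) rfl
  choose G hGc hG using hfam
  obtain ⟨F₀, hF₀c, hF₀⟩ := countable_case ∅ countable_empty
  let δ : A → C(K, ℝ) → C(K, ℝ) := fun a f => f.comp (𝔰.R (P a)) - f.comp (𝔰.R (Q a))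
  refine ⟨F₀ ∪ ⋃ a, δ a '' G a, fun x => ?_, fun x y hxy => ?_⟩
  · have hjump := 𝔰.countable_jumps hD A ρ hρ x
    let S : Set A := {a | 𝔰.R (P a) x ≠ 𝔰.R (Q a) x}
    have hS : S.Countable := by
      refine (hjump.preimage_of_injOn (f := Subtype.val) Subtype.val_injective.injOn).mono ?_
      exact fun a ha => ⟨a.2, ha⟩
    have hbig : (⋃ a ∈ S, δ a '' ({f | f ∈ G a ∧ f (𝔰.R (P a) x) ≠ 0} ∪
        {f | f ∈ G a ∧ f (𝔰.R (Q a) x) ≠ 0})).Countable :=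
      hS.biUnion fun a _ => ((hGc a _).union (hGc a _)).image _
    refine ((hF₀c x).union hbig).mono ?_
    rintro f ⟨hf | hf, hfx⟩
    · exact Or.inl ⟨hf, hfx⟩
    · right
      obtain ⟨a, f, hfG, rfl⟩ := mem_iUnion.1 hf
      have hfx' : f (𝔰.R (P a) x) - f (𝔰.R (Q a) x) ≠ 0 := hfx
      refine mem_biUnion (x := a) ?_ (mem_image_of_mem _ ?_)
      · intro h
        rw [h, sub_self] at hfx'
        exact hfx' rfl
      · by_cases h : f (𝔰.R (P a) x) = 0
        · refine Or.inr ⟨hfG, fun h' => hfx' ?_⟩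
          rw [h, h', sub_self]
        · exact Or.inl ⟨hfG, h⟩
  · by_cases h0 : 𝔰.R ∅ x = 𝔰.R ∅ y
    swap
    · obtain ⟨f, hf, h⟩ := hF₀ x y h0
      exact ⟨f, Or.inl hf, h⟩
    -- A subset of `A` on whose initial segments `R · x = R · y` also satisfies this equality.
    have hull_case : ∀ B ⊆ A, (∀ a ∈ B, 𝔰.R (P a) x = 𝔰.R (P a) y) →
        𝔰.R B x = 𝔰.R B y := by
      intro B hBA hB
      refine 𝔰.R_eq_of_forall ?_
      rintro _ ⟨F, hF, rfl⟩
      rcases F.eq_empty_or_nonempty with rfl | hne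
      · exact 𝔰.r_eq_of_R_eq (A := ∅) ⟨∅, by simp, rfl⟩ h0
      · obtain ⟨m, hm, hmax⟩ := F.exists_max_image ρ hne
        exact 𝔰.r_eq_of_R_eq (A := P m)
          ⟨F, fun b hb => ⟨hBA (hF hb), hmax b hb⟩, rfl⟩ (hB m (hF hm))
    have hex : {a | a ∈ A ∧ 𝔰.R (P a) x ≠ 𝔰.R (P a) y}.Nonempty := by
      by_contra hcon
      rw [not_nonempty_iff_eq_empty] at hcon
      refine hxy (hull_case A Subset.rfl fun a ha => ?_)
      by_contra h
      exact (hcon ▸ (show a ∈ {a | a ∈ A ∧ 𝔰.R (P a) x ≠ 𝔰.R (P a) y} from ⟨ha, h⟩) :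
        a ∈ (∅ : Set 𝔰.Γ))
    -- The first stage separating `x` from `y`.
    obtain ⟨a, ⟨haA, ha⟩, hmin⟩ :=
      (InvImage.wf ρ (wellFounded_lt (α := Ordinal.{u}))).has_min _ hex
    have hQ : 𝔰.R (Q a) x = 𝔰.R (Q a) y := by
      refine hull_case (Q a) (fun b hb => hb.1) fun b hb => ?_
      by_contra h
      exact hmin b ⟨hb.1, h⟩ hb.2
    have hPP : 𝔰.R (P a) (𝔰.R (P a) x) ≠ 𝔰.R (P a) (𝔰.R (P a) y) := by
      rwa [𝔰.R_R Subset.rfl, 𝔰.R_R Subset.rfl]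
    obtain ⟨f, hf, hfxy⟩ := hG ⟨a, haA⟩ _ _ hPP
    refine ⟨δ ⟨a, haA⟩ f, Or.inr (mem_iUnion.2 ⟨⟨a, haA⟩, mem_image_of_mem _ hf⟩), ?_⟩
    intro h
    have h' : f (𝔰.R (P a) x) - f (𝔰.R (Q a) x) = f (𝔰.R (P a) y) - f (𝔰.R (Q a) y) := h
    rw [hQ] at h'
    exact hfxy (sub_left_injective h')

/-- A compact space all of whose points are fixed by some retraction of a skeleton is Corson. -/
lemma isCorsonCompact_of_full (hD : 𝔰.inducedSet = univ) : IsCorsonCompact K := by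
  obtain ⟨F, hFc, hF⟩ := 𝔰.exists_family hD univ
  have hR : ∀ x, 𝔰.R univ x = x := by
    intro x
    obtain ⟨s, hs⟩ := 𝔰.mem_inducedSet.1 (hD ▸ mem_univ x)
    have hfix : 𝔰.r (𝔰.bd {s}) x = x := 𝔰.fixed_of_le (𝔰.le_bd (Finset.mem_singleton_self s)) hs
    have := 𝔰.R_r (A := univ) ⟨{s}, subset_univ _, rfl⟩ x
    rwa [hfix] at this
  let φ : K → F → ℝ := fun x f => f.1 x
  have hφ : Continuous φ := continuous_pi fun f => f.1.continuous
  have hinj : Function.Injective φ := by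
    intro x y hxy
    by_contra hne
    obtain ⟨f, hf, h⟩ := hF x y (by rwa [hR, hR])
    exact h (congrFun hxy ⟨f, hf⟩)
  refine ⟨F, range φ, isCompact_range hφ, ?_,
    ⟨(hφ.isClosedEmbedding hinj).isEmbedding.toHomeomorph⟩⟩
  rintro _ ⟨x, rfl⟩
  refine ((hFc x).preimage_of_injOn (f := Subtype.val) Subtype.val_injective.injOn).mono ?_
  exact fun f hf => ⟨f.2, hf⟩

end Family

end RetractionalSkeleton

/-- If `D` is induced by an r-skeleton in a compact Hausdorff space `K`, then every subset
of `D` which is closed in `K` is Corson compact. -/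
theorem corson_of_closed_subset_induced (K : Type u) [TopologicalSpace K] [CompactSpace K]
    [T2Space K] (D : Set K) (hD : IsInducedByRSkeleton D)
    (C : Set K) (hCD : C ⊆ D) (hC : IsClosed C) :
    IsCorsonCompact ↥C := by
  obtain ⟨𝔰, rfl⟩ := hD
  have : CompactSpace C := isCompact_iff_compactSpace.1 hC.isCompact
  exact (𝔰.restrict hC hCD).isCorsonCompact_of_full (𝔰.restrict_inducedSet hC hCD)
end

section
/- Let K be a compact Hausdorff space such that P(K) has a retractional skeleton. If G denotes the set of all Gδ points of K, then the closure of G in K has a retractional skeleton. -/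
/-!
Let `D ⊆ P(K)` be the set induced by the given skeleton and let `L` be the closure of the set of
Gδ points of `K`. The map `x ↦ δ_x` embeds `L` into `P(K)`.

If `{x}` is Gδ in `K`, some continuous `f ≥ 0` vanishes exactly at `x`, and `δ_x` is then the only
`μ ∈ P(K)` with `μ f = 0`; so `δ_x` is a Gδ point of `P(K)`
(`isGδ_singleton_diracFunctional`). Every Gδ point of a space with a skeleton lies in the induced
set, because countably many indices have a common upper bound
(`RetractionalSkeleton.mem_inducedSet_of_isGδ`). Hence `D` is dense in the copy of `L`.

It remains to see that a skeleton restricts to every compact subspace `F` in which `D` is dense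
(`RetractionalSkeleton.hasRetractionalSkeleton_of_dense`). The indices `t` with `r t [F] ⊆ F` are
closed under suprema of increasing sequences, and they are cofinal
(`RetractionalSkeleton.exists_invariant_ge`): choose increasing `s n` and countable
`A n ⊆ F ∩ D` such that `r (s n) [A n]` is dense in `r (s n) [F]` and `r (s (n + 1))` fixes `A n`
pointwise. For `t = sup s n`, the map `r t` fixes `C = closure (⋃ A n)` pointwise, and by
compactness each `r t x` with `x ∈ F` agrees under all `r (s n)` with some point of `C`, so it is
that point.
-/

open Filter Topology TopologicalSpace Set

universe u v

/-- The space `P(K)` of Radon probability measures on a compact space `K`, identified via the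
Riesz representation theorem with the set of positive normalized functionals in the weak*
dual of `C(K, ℝ)`; the subspace topology is the w*-topology. -/
def probMeasuresSet (K : Type u) [TopologicalSpace K] [CompactSpace K] :
    Set (WeakDual ℝ C(K, ℝ)) :=
  {φ | φ 1 = 1 ∧ ∀ f : C(K, ℝ), (∀ x, 0 ≤ f x) → 0 ≤ φ f}

namespace RetractionalSkeleton

variable {X : Type u} [TopologicalSpace X] (𝔰 : RetractionalSkeleton X)

instance : PartialOrder 𝔰.Γ := 𝔰.po

instance : Nonempty 𝔰.Γ := 𝔰.ne

instance : IsDirectedOrder 𝔰.Γ := ⟨𝔰.directed⟩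

/-- A top index gives the identity retraction. -/
lemma r_eq_of_isTop [T2Space X] {m : 𝔰.Γ} (hm : IsTop m) (x : X) : 𝔰.r m x = x := by
  have h1 : Tendsto (fun s => 𝔰.r s x) atTop (𝓝 (𝔰.r m x)) :=
    tendsto_const_nhds.congr' ((eventually_ge_atTop m).mono fun s hs => by
      rw [le_antisymm hs (hm s)])
  exact tendsto_nhds_unique h1 (𝔰.tendsto_id x)

lemma exists_gt_of_not_top (h : ¬ ∃ m : 𝔰.Γ, IsTop m) (s t : 𝔰.Γ) : ∃ w, s < w ∧ t ≤ w := by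
  simp only [IsTop, not_exists, not_forall] at h
  obtain ⟨b, hb⟩ := h s
  obtain ⟨c, hsc, hbc⟩ := 𝔰.directed s b
  obtain ⟨w, hcw, htw⟩ := 𝔰.directed c t
  refine ⟨w, lt_of_le_of_ne (hsc.trans hcw) ?_, htw⟩
  rintro rfl
  exact hb (hbc.trans hcw)

/-- The index set is `σ`-directed. The case split is needed because suprema are only provided
for strictly increasing sequences. -/
lemma exists_upper_bound (g : ℕ → 𝔰.Γ) : ∃ t, ∀ n, g n ≤ t := by
  by_cases h : ∃ m : 𝔰.Γ, IsTop m
  · obtain ⟨m, hm⟩ := h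
    exact ⟨m, fun n => hm _⟩
  · choose w hw hw' using 𝔰.exists_gt_of_not_top h
    let f : ℕ → 𝔰.Γ := fun n => Nat.rec (g 0) (fun n s => w s (g (n + 1))) n
    have hf : StrictMono f := strictMono_nat_of_lt_succ fun n => hw _ _
    obtain ⟨t, ht, -⟩ := 𝔰.sup_seq f hf
    refine ⟨t, fun n => le_trans ?_ (ht.1 (mem_range_self n))⟩
    cases n with
    | zero => exact le_rfl
    | succ n => exact hw' _ _

lemma mem_inducedSet_iff {x : X} : x ∈ 𝔰.inducedSet ↔ ∃ s, 𝔰.r s x = x := by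
  simp only [inducedSet, mem_iUnion, mem_range]
  constructor
  · rintro ⟨s, y, rfl⟩
    exact ⟨s, 𝔰.isRetraction s y⟩
  · rintro ⟨s, hs⟩
    exact ⟨s, x, hs⟩

lemma r_eq_of_le {s t : 𝔰.Γ} (hst : s ≤ t) {x : X} (hx : 𝔰.r s x = x) : 𝔰.r t x = x := by
  have := (𝔰.comp_eq_of_le s t hst x).2
  rwa [hx] at this

/-- Every Gδ point `x` lies in the induced set: if `{x} = ⋂ U n`, then `r s x ∈ U n` for all
sufficiently large `s`, hence `r t x = x` for an index `t` that is large for every `n` at once. -/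
lemma mem_inducedSet_of_isGδ {x : X} (hx : IsGδ ({x} : Set X)) : x ∈ 𝔰.inducedSet := by
  obtain ⟨U, hU, hxU⟩ := hx.eq_iInter_nat
  have hmem : ∀ n, x ∈ U n := fun n => mem_iInter.1 (hxU ▸ mem_singleton x) n
  have key : ∀ n, ∃ s, ∀ t, s ≤ t → 𝔰.r t x ∈ U n := fun n =>
    eventually_atTop.1 ((𝔰.tendsto_id x).eventually ((hU n).mem_nhds (hmem n)))
  choose g hg using key
  obtain ⟨t, ht⟩ := 𝔰.exists_upper_bound g
  have h1 : 𝔰.r t x ∈ ({x} : Set X) := by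
    rw [hxU]
    exact mem_iInter.2 fun n => hg n t (ht n)
  exact 𝔰.mem_inducedSet_iff.2 ⟨t, h1⟩

section Subspace

variable {L : Type u} [TopologicalSpace L] [CompactSpace L] {e : L → X}

/-- One step of the closing-off construction: since `r s '' (e '' L)` is compact metrizable, a
countable part `A` of the dense set `e ⁻¹' D` has dense image in it, and countably many points
of `D` are fixed by a common retraction. -/
lemma exists_step (he : Continuous e) (hd : Dense (e ⁻¹' 𝔰.inducedSet)) (s : 𝔰.Γ) :
    ∃ (A : Set L) (t : 𝔰.Γ), (∀ l, 𝔰.r s (e l) ∈ closure ((fun a => 𝔰.r s (e a)) '' A)) ∧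
      ∀ a ∈ A, 𝔰.r t (e a) = e a := by
  have := 𝔰.metrizable s
  let := metrizableSpaceMetric (range (𝔰.r s))
  let q : L → range (𝔰.r s) := fun l => ⟨𝔰.r s (e l), mem_range_self _⟩
  have hq : Continuous q := ((𝔰.r s).continuous.comp he).subtype_mk _
  have hsep : IsSeparable (q '' (e ⁻¹' 𝔰.inducedSet)) :=
    (isCompact_range hq).isSeparable.mono (image_subset_range _ _)
  obtain ⟨T, hTsub, hTc, hT⟩ := hsep.exists_countable_dense_subset
  have hT' : ∀ y : T, ∃ l, e l ∈ 𝔰.inducedSet ∧ q l = y := fun y => hTsub y.2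
  choose p hpD hpq using hT'
  have := hTc.to_subtype
  have hfix : ∀ y : T, ∃ t, 𝔰.r t (e (p y)) = e (p y) := fun y =>
    𝔰.mem_inducedSet_iff.1 (hpD y)
  choose g hg using hfix
  obtain ⟨t, ht⟩ : ∃ t, ∀ y, g y ≤ t := by
    rcases isEmpty_or_nonempty T with hE | hE
    · exact ⟨s, fun y => isEmptyElim y⟩
    · obtain ⟨f, hf⟩ := exists_surjective_nat T
      obtain ⟨t, ht⟩ := 𝔰.exists_upper_bound (g ∘ f)
      refine ⟨t, fun y => ?_⟩
      obtain ⟨n, rfl⟩ := hf y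
      exact ht n
  refine ⟨range p, t, fun l => ?_, ?_⟩
  · have h1 : q l ∈ closure T := by
      have h2 : q l ∈ closure (q '' (e ⁻¹' 𝔰.inducedSet)) :=
        image_closure_subset_closure_image hq (mem_image_of_mem q (hd l))
      exact closure_minimal hT isClosed_closure h2
    have h3 := image_closure_subset_closure_image continuous_subtype_val
      (mem_image_of_mem Subtype.val h1)
    refine closure_mono ?_ h3
    rintro _ ⟨y, hy, rfl⟩
    refine ⟨p ⟨y, hy⟩, mem_range_self _, ?_⟩
    exact congrArg Subtype.val (hpq ⟨y, hy⟩)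
  · rintro _ ⟨y, rfl⟩
    exact 𝔰.r_eq_of_le (ht y) (hg y)

/-- The indices whose retraction leaves `e '' L` invariant are cofinal. With `s n` and `A n`
produced by iterating `exists_step` and `t = sup s n`, the retraction `r t` maps `e '' L` into
the closure of `e '' ⋃ A n`, because the maps `r (s n)` separate the points of `r t '' X`. -/
lemma exists_invariant_ge [T2Space X] (he : Continuous e) (hd : Dense (e ⁻¹' 𝔰.inducedSet))
    (s₀ : 𝔰.Γ) : ∃ t, s₀ ≤ t ∧ ∀ l, 𝔰.r t (e l) ∈ range e := by
  by_cases h : ∃ m : 𝔰.Γ, IsTop m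
  · obtain ⟨m, hm⟩ := h
    exact ⟨m, hm _, fun l => ⟨l, (𝔰.r_eq_of_isTop hm _).symm⟩⟩
  choose A nxt hA hnxt using 𝔰.exists_step he hd
  choose w hw hw' using 𝔰.exists_gt_of_not_top h
  let f : ℕ → 𝔰.Γ := fun n => Nat.rec s₀ (fun _ s => w s (nxt s)) n
  have hf : StrictMono f := strictMono_nat_of_lt_succ fun n => hw _ _
  obtain ⟨t, ht, hlim⟩ := 𝔰.sup_seq f hf
  have hle : ∀ n, f n ≤ t := fun n => ht.1 (mem_range_self n)
  refine ⟨t, hle 0, fun l => ?_⟩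
  let C : Set L := closure (⋃ n, A (f n))
  have hCfix : ∀ c ∈ C, 𝔰.r t (e c) = e c := by
    have hcl : IsClosed {c | 𝔰.r t (e c) = e c} :=
      isClosed_eq ((𝔰.r t).continuous.comp he) he
    refine fun c hc => closure_minimal ?_ hcl hc
    refine iUnion_subset fun n a ha => ?_
    exact 𝔰.r_eq_of_le ((hw' (f n) (nxt (f n))).trans (hle (n + 1))) (hnxt _ a ha)
  let Z : ℕ → Set L := fun n => C ∩ {c | 𝔰.r (f n) (e c) = 𝔰.r (f n) (e l)}
  have hZcl : ∀ n, IsClosed (Z n) := fun n => isClosed_closure.inter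
    (isClosed_eq ((𝔰.r (f n)).continuous.comp he) continuous_const)
  have hZanti : ∀ n, Z (n + 1) ⊆ Z n := by
    rintro n c ⟨hc, hcl⟩
    have hcl : 𝔰.r (f (n + 1)) (e c) = 𝔰.r (f (n + 1)) (e l) := hcl
    have hs := 𝔰.comp_eq_of_le (f n) (f (n + 1)) (hf.monotone n.le_succ)
    refine ⟨hc, ?_⟩
    change 𝔰.r (f n) (e c) = 𝔰.r (f n) (e l)
    rw [← (hs (e c)).1, hcl, (hs (e l)).1]
  have hZne : ∀ n, (Z n).Nonempty := by
    intro n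
    have hcomp : IsCompact ((fun a => 𝔰.r (f n) (e a)) '' C) :=
      isClosed_closure.isCompact.image ((𝔰.r (f n)).continuous.comp he)
    have hsub : (fun a => 𝔰.r (f n) (e a)) '' A (f n) ⊆ (fun a => 𝔰.r (f n) (e a)) '' C :=
      image_mono ((subset_iUnion (fun n => A (f n)) n).trans subset_closure)
    obtain ⟨c, hc, hcl⟩ := closure_minimal hsub hcomp.isClosed (hA (f n) l)
    exact ⟨c, hc, hcl⟩
  obtain ⟨c, hc⟩ := IsCompact.nonempty_iInter_of_sequence_nonempty_isCompact_isClosed Z hZanti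
    hZne (hZcl 0).isCompact hZcl
  rw [mem_iInter] at hc
  refine ⟨c, ?_⟩
  rw [← hCfix c (hc 0).1]
  refine tendsto_nhds_unique (hlim (e c)) ((hlim (e l)).congr fun n => ?_)
  exact (hc n).2.symm

/-- A retractional skeleton in `X` with induced set `D` restricts to a retractional skeleton of
any compact subspace in which `D` is dense: keep the indices whose retraction leaves the
subspace invariant. -/
theorem hasRetractionalSkeleton_of_dense [T2Space X] (he : IsEmbedding e)
    (hd : Dense (e ⁻¹' 𝔰.inducedSet)) : HasRetractionalSkeleton L := by
  have hcof := 𝔰.exists_invariant_ge he.continuous hd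
  let Γ' : Set 𝔰.Γ := {s | ∀ l, 𝔰.r s (e l) ∈ range e}
  choose ρ hρ using fun (s : Γ') (l : L) => s.2 l
  have hρc : ∀ s, Continuous (ρ s) := fun s => he.continuous_iff.2 <| by
    have : e ∘ ρ s = fun l => 𝔰.r s (e l) := funext (hρ s)
    rw [this]
    exact (𝔰.r s).continuous.comp he.continuous
  have hcl : IsClosed (range e) := (isCompact_range he.continuous).isClosed
  obtain ⟨t₀, -, ht₀⟩ := hcof (Classical.arbitrary 𝔰.Γ)
  have hval : Tendsto (Subtype.val : Γ' → 𝔰.Γ) atTop atTop :=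
    tendsto_atTop.2 fun s => by
      obtain ⟨t, hst, ht⟩ := hcof s
      exact (eventually_ge_atTop (⟨t, ht⟩ : Γ')).mono fun a ha => hst.trans ha
  exact ⟨{
    Γ := Γ'
    ne := ⟨⟨t₀, ht₀⟩⟩
    directed := by
      rintro ⟨s, hs⟩ ⟨t, ht⟩
      obtain ⟨w, hsw, htw⟩ := 𝔰.directed s t
      obtain ⟨w', hw, hw'⟩ := hcof w
      exact ⟨⟨w', hw'⟩, hsw.trans hw, htw.trans hw⟩
    r := fun s => ⟨ρ s, hρc s⟩
    isRetraction := fun s l => he.injective <| by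
      simp only [ContinuousMap.coe_mk, hρ, 𝔰.isRetraction]
    metrizable := fun s => by
      have := 𝔰.metrizable s
      let j : range (ρ s) → range (𝔰.r s) := fun y => ⟨e y, by
        obtain ⟨_, l, rfl⟩ := y
        exact ⟨e l, (hρ s l).symm⟩⟩
      have hj : IsEmbedding j := IsEmbedding.of_comp
        ((he.continuous.comp continuous_subtype_val).subtype_mk _) continuous_subtype_val
        (he.comp IsEmbedding.subtypeVal)
      exact hj.metrizableSpace
    tendsto_id := fun l => he.tendsto_nhds_iff.2 <| by
      have : (e ∘ fun s => ρ s l) = (fun s => 𝔰.r s (e l)) ∘ (Subtype.val : Γ' → 𝔰.Γ) :=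
        funext fun s => hρ s l
      exact this ▸ (𝔰.tendsto_id (e l)).comp hval
    comp_eq_of_le := fun s t hst l => by
      have h := 𝔰.comp_eq_of_le s t hst (e l)
      constructor <;> apply he.injective <;> simp only [ContinuousMap.coe_mk, hρ, h.1, h.2]
    sup_seq := fun f hf => by
      obtain ⟨t, ht, hlim⟩ := 𝔰.sup_seq (fun n => (f n : 𝔰.Γ)) hf
      have htΓ : t ∈ Γ' := fun l =>
        hcl.mem_of_tendsto (hlim (e l)) (Eventually.of_forall fun n => (f n).2 l)
      refine ⟨⟨t, htΓ⟩, ⟨?_, ?_⟩, fun l => he.tendsto_nhds_iff.2 ?_⟩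
      · rintro _ ⟨n, rfl⟩
        exact ht.1 (mem_range_self n)
      · intro u hu
        refine ht.2 ?_
        rintro _ ⟨n, rfl⟩
        exact hu (mem_range_self n)
      · have h1 : (e ∘ fun n => ρ (f n) l) = fun n => 𝔰.r (f n) (e l) :=
          funext fun n => hρ (f n) l
        have h2 : e (ρ ⟨t, htΓ⟩ l) = 𝔰.r t (e l) := hρ ⟨t, htΓ⟩ l
        simp only [ContinuousMap.coe_mk]
        rw [h1, h2]
        exact hlim (e l) }⟩

end Subspace

end RetractionalSkeleton

section Dirac

variable {K : Type u} [TopologicalSpace K] [CompactSpace K]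

/-- The Dirac measure at `x`, as the evaluation functional `f ↦ f x` in `P(K)`. -/
noncomputable def diracFunctional (x : K) : probMeasuresSet K :=
  ⟨StrongDual.toWeakDual (ContinuousMap.evalCLM ℝ x), rfl, fun _ hf => hf x⟩

@[simp]
lemma diracFunctional_apply (x : K) (f : C(K, ℝ)) :
    (diracFunctional x : WeakDual ℝ C(K, ℝ)) f = f x := rfl

lemma continuous_diracFunctional : Continuous (diracFunctional : K → probMeasuresSet K) :=
  Continuous.subtype_mk (WeakDual.continuous_of_continuous_eval fun f => f.continuous) _

lemma injective_diracFunctional [T2Space K] :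
    Function.Injective (diracFunctional : K → probMeasuresSet K) := by
  intro x y hxy
  by_contra hne
  obtain ⟨f, hfx, hfy, -⟩ := exists_continuous_zero_one_of_isClosed (isClosed_singleton (x := x))
    (isClosed_singleton (x := y)) (by simpa using hne)
  have h : f x = f y := by rw [← diracFunctional_apply, hxy, diracFunctional_apply]
  rw [hfx rfl, hfy rfl] at h
  exact zero_ne_one h

/-- If a nonnegative `f` vanishes only at `x`, then `δ_x` is the only element of `P(K)`
annihilating `f`: for every `g` and `ε > 0` there is `M` with `|g - g x| ≤ ε + M f`. -/
lemma eq_diracFunctional_of_apply_eq_zero {x : K} {f : C(K, ℝ)} (hf0 : ∀ y, 0 ≤ f y)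
    (hf : ∀ y, f y = 0 → y = x) (φ : probMeasuresSet K)
    (hφ : (φ : WeakDual ℝ C(K, ℝ)) f = 0) : φ = diracFunctional x := by
  obtain ⟨φ, hφ1, hφpos⟩ := φ
  apply Subtype.ext
  refine DFunLike.ext _ _ fun g => ?_
  change φ g = g x
  have hφ : φ f = 0 := hφ
  have hφc : ∀ c : ℝ, φ (ContinuousMap.const K c) = c := fun c => by
    have : ContinuousMap.const K c = c • (1 : C(K, ℝ)) := by ext; simp
    rw [this, map_smul, hφ1]; simp
  refine eq_of_abs_sub_le_all fun ε hε => ?_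
  obtain ⟨M, hM⟩ : ∃ M : ℝ, ∀ y, |g y - g x| ≤ ε + M * f y := by
    let S : Set K := {y | ε ≤ |g y - g x|}
    have hS : IsCompact S :=
      (isClosed_le continuous_const ((g.continuous.sub continuous_const).abs)).isCompact
    have hfS : ∀ y ∈ S, f y ≠ 0 := by
      intro y hy h0
      have hy : ε ≤ |g y - g x| := hy
      rw [hf y h0, sub_self, abs_zero] at hy
      linarith
    -- `M` bounds the quotient `|g - g x| / f` on the compact set where `|g - g x| ≥ ε`.
    obtain ⟨M, hM⟩ := (hS.image_of_continuousOn (f := fun y => |g y - g x| / f y)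
      ((g.continuous.sub continuous_const).abs.continuousOn.div
        f.continuous.continuousOn hfS)).bddAbove
    refine ⟨max M 0, fun y => ?_⟩
    by_cases hy : y ∈ S
    · have hpos : 0 < f y := lt_of_le_of_ne (hf0 y) (hfS y hy).symm
      have h1 : |g y - g x| / f y ≤ M := hM (mem_image_of_mem _ hy)
      rw [div_le_iff₀ hpos] at h1
      have h2 := mul_le_mul_of_nonneg_right (le_max_left M 0) hpos.le
      linarith
    · have hy : |g y - g x| < ε := not_le.1 hy
      have := mul_nonneg (le_max_right M 0) (hf0 y)
      linarith
  have h1 := hφpos (ContinuousMap.const K ε + M • f - (g - ContinuousMap.const K (g x)))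
    fun y => by
      have := (abs_le.1 (hM y)).2
      simp
      linarith
  have h2 := hφpos (ContinuousMap.const K ε + M • f + (g - ContinuousMap.const K (g x)))
    fun y => by
      have := (abs_le.1 (hM y)).1
      simp
      linarith
  simp only [map_sub, map_add, map_smul, hφ, hφc, smul_zero] at h1 h2
  rw [abs_le]
  constructor <;> linarith

/-- The Dirac measure at a Gδ point of `K` is a Gδ point of `P(K)`. -/
lemma isGδ_singleton_diracFunctional [T2Space K] {x : K} (hx : IsGδ ({x} : Set K)) :
    IsGδ ({diracFunctional x} : Set (probMeasuresSet K)) := by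
  obtain ⟨f, hf, -, -, hf1⟩ := exists_continuous_one_zero_of_isCompact_of_isGδ
    isCompact_singleton hx isClosed_empty (disjoint_empty _)
  have hfx : f x = 1 := by
    have : x ∈ f ⁻¹' {1} := hf ▸ mem_singleton x
    exact this
  have hev : Continuous fun φ : probMeasuresSet K => (φ : WeakDual ℝ C(K, ℝ)) (1 - f) :=
    (WeakDual.eval_continuous (1 - f)).comp continuous_subtype_val
  have heq : ({diracFunctional x} : Set (probMeasuresSet K)) =
      (fun φ : probMeasuresSet K => (φ : WeakDual ℝ C(K, ℝ)) (1 - f)) ⁻¹' {0} := by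
    ext φ
    constructor
    · rintro rfl
      simp [hfx]
    · intro h
      refine eq_diracFunctional_of_apply_eq_zero (f := 1 - f) (fun y => ?_) (fun y hy => ?_) φ h
      · simpa using (hf1 y).2
      · have h1 : f y = 1 := by
          simp at hy
          linarith
        have : y ∈ f ⁻¹' {1} := h1
        rwa [← hf] at this
  rw [heq]
  exact (IsGδ.singleton (0 : ℝ)).preimage hev

end Dirac

/-- If `P(K)` has a retractional skeleton, then the closure of the set of Gδ points of `K`
has a retractional skeleton. -/
theorem closure_Gdelta_points_hasRetractionalSkeleton (K : Type u) [TopologicalSpace K]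
    [CompactSpace K] [T2Space K]
    (h : HasRetractionalSkeleton ↥(probMeasuresSet K)) :
    HasRetractionalSkeleton ↥(closure {x : K | IsGδ ({x} : Set K)}) := by
  obtain ⟨𝔰⟩ := h
  let L : Set K := closure {x : K | IsGδ ({x} : Set K)}
  have : CompactSpace L := isCompact_iff_compactSpace.1 isClosed_closure.isCompact
  have hemb : IsEmbedding fun l : L => diracFunctional (l : K) :=
    ((continuous_diracFunctional.comp continuous_subtype_val).isClosedEmbedding
      (injective_diracFunctional.comp Subtype.val_injective)).isEmbedding
  refine 𝔰.hasRetractionalSkeleton_of_dense hemb fun l => ?_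
  rw [closure_subtype]
  refine closure_mono ?_ l.2
  intro x hx
  exact ⟨⟨x, subset_closure hx⟩,
    𝔰.mem_inducedSet_of_isGδ (isGδ_singleton_diracFunctional hx), rfl⟩
end
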